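/- For all f∈L²(𝕋), g∈H¹(𝕋) and h∈L²(𝕋): ∑_{k≠0} ∑_{k₁+k₂=k, |k₁|>10|k|} |k|^{−1}|k₁| |f̂_{k₁}| |ĝ_{k₂}| |ĥ_k| ≤ C‖f‖_{L²}‖g‖_{H¹}‖h‖_{L²}, where C is an absolute constant. -/

import Mathlib

/-!
If `|k₁| > c |k|` with `c > 1`, then `k₂ = k - k₁` satisfies `|k₁| ≤ c / (c - 1) * |k₂|`, so all the
derivatives on `f` can be moved onto `g`. Cauchy–Schwarz in `k₁` then bounds the inner sum uniformly
in `k` by the norms of `f` and `g`, and a second Cauchy–Schwarz in `k` pairs `h` with `|k|^(-σ)`,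
which is square-summable as soon as `σ > 1/2`.
-/

noncomputable section

open Complex MeasureTheory
open scoped BigOperators

/-- A function on the torus `𝕋 = (-π,π)` is represented by its sequence of Fourier
coefficients `f̂ : ℤ → ℂ`. -/
abbrev FSeq := ℤ → ℂ

/-- Membership in the Sobolev space `H^s(𝕋)`:
`∑_{k∈ℤ} (1+k²)^s |f̂_k|² < ∞`. -/
def InHs (s : ℝ) (a : FSeq) : Prop :=
  Summable fun k : ℤ => (1 + (k : ℝ) ^ 2) ^ s * ‖a k‖ ^ 2

/-- The `H^s(𝕋)` norm: `‖f‖_{H^s}² = 2π ∑_{k∈ℤ} (1+k²)^s |f̂_k|²`. -/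
def hnorm (s : ℝ) (a : FSeq) : ℝ :=
  Real.sqrt (2 * Real.pi * ∑' k : ℤ, (1 + (k : ℝ) ^ 2) ^ s * ‖a k‖ ^ 2)

lemma tsum_le_mul_sqrt_tsum_sq_mul_sqrt_tsum_sq {ι : Type*} {F a b : ι → ℝ} {c : ℝ} (hc : 0 ≤ c)
    (ha₀ : ∀ i, 0 ≤ a i) (hb₀ : ∀ i, 0 ≤ b i)
    (ha : Summable fun i ↦ a i ^ 2) (hb : Summable fun i ↦ b i ^ 2)
    (hF₀ : ∀ i, 0 ≤ F i) (hF : ∀ i, F i ≤ c * (a i * b i)) :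
    ∑' i, F i ≤ c * (√(∑' i, a i ^ 2) * √(∑' i, b i ^ 2)) := by
  obtain ⟨hab, hle⟩ := Real.summable_and_inner_le_Lp_mul_Lq_tsum_of_nonneg
    Real.HolderConjugate.two_two ha₀ hb₀ (mod_cast ha) (mod_cast hb)
  have hcab : Summable fun i ↦ c * (a i * b i) := hab.mul_left c
  calc ∑' i, F i ≤ ∑' i, c * (a i * b i) := (hcab.of_nonneg_of_le hF₀ hF).tsum_le_tsum hF hcab
    _ = c * ∑' i, a i * b i := tsum_mul_left
    _ ≤ c * (√(∑' i, a i ^ 2) * √(∑' i, b i ^ 2)) := by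
      gcongr
      simpa only [Real.sqrt_eq_rpow, Real.rpow_two] using hle

lemma tsum_tsum_le_of_le_mul_mul_sub_mul {G : Type*} [AddGroup G] {K : G → G → ℝ} {w a b d : G → ℝ}
    (hw₀ : ∀ k, 0 ≤ w k) (ha₀ : ∀ k, 0 ≤ a k) (hb₀ : ∀ k, 0 ≤ b k) (hd₀ : ∀ k, 0 ≤ d k)
    (hw : Summable fun k ↦ w k ^ 2) (ha : Summable fun k ↦ a k ^ 2)
    (hb : Summable fun k ↦ b k ^ 2) (hd : Summable fun k ↦ d k ^ 2)
    (hK₀ : ∀ k j, 0 ≤ K k j) (hK : ∀ k j, K k j ≤ w k * a j * b (k - j) * d k) :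
    ∑' k, ∑' j, K k j ≤
      √(∑' k, w k ^ 2) * √(∑' k, a k ^ 2) * √(∑' k, b k ^ 2) * √(∑' k, d k ^ 2) := by
  have inner_le (k : G) :
      ∑' j, K k j ≤ w k * d k * (√(∑' j, a j ^ 2) * √(∑' j, b j ^ 2)) := by
    rw [← (Equiv.subLeft k).tsum_eq fun j ↦ b j ^ 2]
    exact tsum_le_mul_sqrt_tsum_sq_mul_sqrt_tsum_sq (mul_nonneg (hw₀ k) (hd₀ k)) ha₀
      (fun j ↦ hb₀ (k - j)) ha ((Equiv.subLeft k).summable_iff.2 hb) (hK₀ k)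
      fun j ↦ (hK k j).trans_eq (by rw [Equiv.subLeft_apply]; ring)
  calc ∑' k, ∑' j, K k j
      ≤ √(∑' j, a j ^ 2) * √(∑' j, b j ^ 2) * (√(∑' k, w k ^ 2) * √(∑' k, d k ^ 2)) :=
        tsum_le_mul_sqrt_tsum_sq_mul_sqrt_tsum_sq (by positivity) hw₀ hd₀ hw hd
          (fun k ↦ tsum_nonneg (hK₀ k)) fun k ↦ (inner_le k).trans_eq (mul_comm _ _)
    _ = _ := by ring

section BesselCoeff

/-- The modulus `⟨k⟩^s |â_k|`, with `⟨k⟩ = (1 + k²)^(1/2)`, of the `k`-th Fourier coefficient of the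
Bessel potential `(1 - Δ)^(s/2) a`. It turns `H^s` norms into `ℓ²` norms: `hnorm s a` is `√(2π)`
times the `ℓ²` norm of `besselCoeff s a`. -/
def besselCoeff (s : ℝ) (a : FSeq) (k : ℤ) : ℝ :=
  (1 + (k : ℝ) ^ 2) ^ (s / 2) * ‖a k‖

variable (s : ℝ) (a : FSeq) (k : ℤ)

lemma besselCoeff_nonneg : 0 ≤ besselCoeff s a k := by
  unfold besselCoeff
  positivity

lemma besselCoeff_zero : besselCoeff 0 a k = ‖a k‖ := by
  simp [besselCoeff]

lemma besselCoeff_sq : besselCoeff s a k ^ 2 = (1 + (k : ℝ) ^ 2) ^ s * ‖a k‖ ^ 2 := by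
  rw [besselCoeff, mul_pow, ← Real.rpow_mul_natCast (by positivity), Nat.cast_ofNat,
    div_mul_cancel₀ s two_ne_zero]

variable {s a} in
lemma InHs.summable_besselCoeff_sq (ha : InHs s a) : Summable fun k ↦ besselCoeff s a k ^ 2 := by
  simpa only [besselCoeff_sq, InHs] using ha

lemma hnorm_nonneg : 0 ≤ hnorm s a :=
  Real.sqrt_nonneg _

lemma sqrt_tsum_besselCoeff_sq_le_hnorm : √(∑' k, besselCoeff s a k ^ 2) ≤ hnorm s a := by
  simp only [besselCoeff_sq, hnorm]
  exact Real.sqrt_le_sqrt <| le_mul_of_one_le_left (tsum_nonneg fun k ↦ by positivity)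
    (by linarith [Real.pi_gt_three])

variable {s} in
lemma abs_rpow_mul_norm_le_besselCoeff (hs : 0 ≤ s) :
    |(k : ℝ)| ^ s * ‖a k‖ ≤ besselCoeff s a k := by
  have abs_le : |(k : ℝ)| ≤ √(1 + (k : ℝ) ^ 2) := Real.abs_le_sqrt (by linarith)
  calc |(k : ℝ)| ^ s * ‖a k‖ ≤ √(1 + (k : ℝ) ^ 2) ^ s * ‖a k‖ := by gcongr
    _ = besselCoeff s a k := by
      rw [besselCoeff, Real.sqrt_eq_rpow, ← Real.rpow_mul (by positivity), one_div_mul_eq_div]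

lemma tsum_tsum_le_mul_hnorm_of_le_mul_besselCoeff {r s t : ℝ} {f g h : FSeq} {K : ℤ → ℤ → ℝ}
    {w : ℤ → ℝ} (hf : InHs r f) (hg : InHs s g) (hh : InHs t h)
    (hw₀ : ∀ k, 0 ≤ w k) (hw : Summable fun k ↦ w k ^ 2) (hK₀ : ∀ k j, 0 ≤ K k j)
    (hK : ∀ k j, K k j ≤ w k * besselCoeff r f j * besselCoeff s g (k - j) * besselCoeff t h k) :
    ∑' k, ∑' j, K k j ≤ √(∑' k, w k ^ 2) * hnorm r f * hnorm s g * hnorm t h := by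
  have hnorm_f_nonneg := hnorm_nonneg r f
  have hnorm_g_nonneg := hnorm_nonneg s g
  calc ∑' k, ∑' j, K k j
      ≤ √(∑' k, w k ^ 2) * √(∑' k, besselCoeff r f k ^ 2) * √(∑' k, besselCoeff s g k ^ 2)
          * √(∑' k, besselCoeff t h k ^ 2) :=
        tsum_tsum_le_of_le_mul_mul_sub_mul hw₀ (besselCoeff_nonneg r f) (besselCoeff_nonneg s g)
          (besselCoeff_nonneg t h) hw hf.summable_besselCoeff_sq hg.summable_besselCoeff_sq
          hh.summable_besselCoeff_sq hK₀ hK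
    _ ≤ √(∑' k, w k ^ 2) * hnorm r f * hnorm s g * hnorm t h := by
      gcongr <;> exact sqrt_tsum_besselCoeff_sq_le_hnorm _ _

end BesselCoeff

lemma abs_le_div_mul_abs_sub_of_mul_abs_lt {𝕜 : Type*} [Field 𝕜] [LinearOrder 𝕜]
    [IsStrictOrderedRing 𝕜] {c x y : 𝕜} (hc : 1 < c) (h : c * |x| < |y|) :
    |y| ≤ c / (c - 1) * |x - y| := by
  rw [div_mul_eq_mul_div, le_div_iff₀ (sub_pos.2 hc)]
  have triangle : |y| - |x| ≤ |x - y| := abs_sub_comm x y ▸ abs_sub_abs_le_abs_sub y x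
  calc |y| * (c - 1) ≤ c * (|y| - |x|) := by linarith
    _ ≤ c * |x - y| := by gcongr

lemma abs_rpow_mul_norm_le_div_rpow_mul_besselCoeff {c s : ℝ} (hc : 1 < c) (hs : 0 ≤ s) (a : FSeq)
    {k k₁ : ℤ} (h : c * |(k : ℝ)| < |(k₁ : ℝ)|) :
    |(k₁ : ℝ)| ^ s * ‖a (k - k₁)‖ ≤ (c / (c - 1)) ^ s * besselCoeff s a (k - k₁) := by
  have c_div_nonneg : 0 ≤ c / (c - 1) := div_nonneg (by linarith) (by linarith)
  calc |(k₁ : ℝ)| ^ s * ‖a (k - k₁)‖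
      ≤ (c / (c - 1) * |(k : ℝ) - k₁|) ^ s * ‖a (k - k₁)‖ := by
        gcongr
        exact abs_le_div_mul_abs_sub_of_mul_abs_lt hc h
    _ = (c / (c - 1)) ^ s * (|((k - k₁ : ℤ) : ℝ)| ^ s * ‖a (k - k₁)‖) := by
        rw [Real.mul_rpow c_div_nonneg (abs_nonneg _), mul_assoc, Int.cast_sub]
    _ ≤ (c / (c - 1)) ^ s * besselCoeff s a (k - k₁) := by
        gcongr
        exact abs_rpow_mul_norm_le_besselCoeff a (k - k₁) hs

lemma summable_abs_int_rpow_neg_sq {σ : ℝ} (hσ : 1 / 2 < σ) :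
    Summable fun k : ℤ ↦ (|(k : ℝ)| ^ (-σ)) ^ 2 := by
  convert Real.summable_abs_int_rpow (b := 2 * σ) (by linarith) using 2 with k
  rw [← Real.rpow_mul_natCast (abs_nonneg _)]
  congr 1
  push_cast
  ring

theorem high_freq_sum_L2_H1_general {c s σ : ℝ} (hc : 1 < c) (hs : 0 ≤ s) (hσ : 1 / 2 < σ) :
    ∃ C : ℝ, 0 < C ∧ ∀ f g h : FSeq, InHs 0 f → InHs s g → InHs 0 h →
      ∑' k : ℤ, ∑' k₁ : ℤ,
        (if k ≠ 0 ∧ c * |(k : ℝ)| < |(k₁ : ℝ)| then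
          |(k : ℝ)| ^ (-σ) * |(k₁ : ℝ)| ^ s * ‖f k₁‖ * ‖g (k - k₁)‖ * ‖h k‖ else 0)
      ≤ C * hnorm 0 f * hnorm s g * hnorm 0 h := by
  have c_div_pos : 0 < c / (c - 1) := div_pos (by linarith) (by linarith)
  set w : ℤ → ℝ := fun k ↦ (c / (c - 1)) ^ s * |(k : ℝ)| ^ (-σ) with w_def
  have w_nonneg (k : ℤ) : 0 ≤ w k := by positivity
  have w_summable : Summable fun k ↦ w k ^ 2 := by
    simpa only [w_def, mul_pow] using (summable_abs_int_rpow_neg_sq hσ).mul_left _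
  have w_one_pos : 0 < w 1 := by simpa [w_def] using Real.rpow_pos_of_pos c_div_pos s
  have w_norm_pos : 0 < √(∑' k, w k ^ 2) :=
    Real.sqrt_pos.2 <| w_summable.tsum_pos (fun k ↦ sq_nonneg (w k)) 1 (pow_pos w_one_pos 2)
  refine ⟨√(∑' k, w k ^ 2), w_norm_pos, fun f g h hf hg hh ↦ ?_⟩
  refine tsum_tsum_le_mul_hnorm_of_le_mul_besselCoeff hf hg hh w_nonneg w_summable
    (fun k k₁ ↦ by split_ifs <;> positivity) fun k k₁ ↦ ?_
  have g_nonneg := besselCoeff_nonneg s g (k - k₁)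
  simp only [besselCoeff_zero]
  split_ifs with hk
  · have transfer := abs_rpow_mul_norm_le_div_rpow_mul_besselCoeff hc hs g hk.2
    calc |(k : ℝ)| ^ (-σ) * |(k₁ : ℝ)| ^ s * ‖f k₁‖ * ‖g (k - k₁)‖ * ‖h k‖
        = |(k : ℝ)| ^ (-σ) * ‖f k₁‖ * ‖h k‖ * (|(k₁ : ℝ)| ^ s * ‖g (k - k₁)‖) := by ring
      _ ≤ |(k : ℝ)| ^ (-σ) * ‖f k₁‖ * ‖h k‖ *
            ((c / (c - 1)) ^ s * besselCoeff s g (k - k₁)) := by gcongr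
      _ = w k * ‖f k₁‖ * besselCoeff s g (k - k₁) * ‖h k‖ := by ring
  · positivity

theorem high_freq_sum_L2_H1 :
    ∃ C : ℝ, 0 < C ∧ ∀ f g h : FSeq, InHs 0 f → InHs 1 g → InHs 0 h →
      ∑' k : ℤ, ∑' k₁ : ℤ,
        (if k ≠ 0 ∧ 10 * |k| < |k₁| then
          (|(k : ℝ)|)⁻¹ * |(k₁ : ℝ)| * ‖f k₁‖ * ‖g (k - k₁)‖ * ‖h k‖ else 0)
      ≤ C * hnorm 0 f * hnorm 1 g * hnorm 0 h := by
  obtain ⟨C, C_pos, hC⟩ := high_freq_sum_L2_H1_general (c := 10) (s := 1) (σ := 1)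
    (by norm_num) zero_le_one (by norm_num)
  refine ⟨C, C_pos, fun f g h hf hg hh ↦ ?_⟩
  simp only [Real.rpow_neg_one, Real.rpow_one] at hC
  exact_mod_cast hC f g h hf hg hh

end
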